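/- For every integer n ≥ 2, o3(n-1) equals the number of partitions of n in which no odd part is repeated, the largest part is odd, and the largest part minus 1 does not occur as a part. (The bijection adds 1 to the largest part.) -/

import Mathlib

/-- No even part is repeated (all even parts are distinct). -/
def EvenDistinct {n : ℕ} (p : n.Partition) : Prop :=
  ∀ i, Even i → p.parts.count i ≤ 1

/-- No odd part is repeated (all odd parts are distinct). -/
def OddDistinct {n : ℕ} (p : n.Partition) : Prop :=
  ∀ i, Odd i → p.parts.count i ≤ 1

/-- The largest part of a partition (0 for the empty partition of 0). -/
def maxPart {n : ℕ} (p : n.Partition) : ℕ := p.parts.sup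

/-- Number of partitions of n with no odd part repeated, largest part even,
and the largest part appearing exactly once. -/
noncomputable def o3 (n : ℕ) : ℕ :=
  Nat.card {p : n.Partition // OddDistinct p ∧ p.parts ≠ 0 ∧ Even (maxPart p) ∧
    p.parts.count (maxPart p) = 1}

/-!
Adding 1 to a largest part is an injection from the partitions of `n` to the partitions of `n + 1`.
Its range consists of the partitions whose largest part `m` appears once: the inverse replaces `m`
by `m - 1`. Under this map the largest part changes parity, and `m - 1` is missing from the image
exactly when the largest part of the source appears once. A partition of `n + 1` with distinct odd
parts and odd largest part has a unique largest part, hence lies in the range.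
-/

theorem multiset_sup_mem {α : Type*} [LinearOrder α] [OrderBot α] {s : Multiset α} (hs : s ≠ 0) :
    s.sup ∈ s := by
  obtain ⟨b, hb, hsup⟩ := s.toFinset.exists_mem_eq_sup (Multiset.toFinset_nonempty.2 hs) id
  have hb_eq : s.sup = b := by
    simpa [Finset.sup_def, Multiset.sup_dedup] using hsup
  exact hb_eq ▸ Multiset.mem_toFinset.1 hb

section Multiset

variable {α : Type*} [SemilatticeSup α] [OrderBot α] {s : Multiset α} {a : α}

theorem multiset_sup_cons_eq_left (h : ∀ b ∈ s, b ≤ a) : (a ::ₘ s).sup = a := by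
  rw [Multiset.sup_cons, sup_eq_left, Multiset.sup_le]
  exact h

theorem lt_sup_of_mem_erase_sup [DecidableEq α] (hs : s.count s.sup ≤ 1)
    (ha : a ∈ s.erase s.sup) : a < s.sup := by
  refine (Multiset.le_sup (Multiset.mem_of_mem_erase ha)).lt_of_ne ?_
  rintro rfl
  have hcount := Multiset.count_pos.2 ha
  rw [Multiset.count_erase_self] at hcount
  omega

end Multiset

section MaxPart

variable {n : ℕ} (p : n.Partition)

theorem maxPart_mem (hn : n ≠ 0) : maxPart p ∈ p.parts := by
  refine multiset_sup_mem fun hparts => hn ?_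
  rw [← p.parts_sum, hparts, Multiset.sum_zero]

theorem maxPart_add_sum_erase : maxPart p + (p.parts.erase (maxPart p)).sum = n := by
  obtain rfl | hn := eq_or_ne n 0
  · simp [maxPart]
  · rw [Multiset.sum_erase (maxPart_mem p hn), p.parts_sum]

variable {p}

theorem le_maxPart_of_mem_erase {x : ℕ} (hx : x ∈ p.parts.erase (maxPart p)) : x ≤ maxPart p :=
  Multiset.le_sup (Multiset.mem_of_mem_erase hx)

theorem one_lt_maxPart (hn : 1 < n) (hp : p.parts.count (maxPart p) = 1) : 1 < maxPart p := by
  by_contra! hle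
  have herase : p.parts.erase (maxPart p) = 0 :=
    Multiset.eq_zero_of_forall_notMem fun x hx => by
      have hpos : 0 < x := p.parts_pos (Multiset.mem_of_mem_erase hx)
      have hlt : x < maxPart p := lt_sup_of_mem_erase_sup hp.le hx
      omega
  have hsum := maxPart_add_sum_erase p
  rw [herase, Multiset.sum_zero] at hsum
  omega

theorem OddDistinct.count_maxPart (hp : OddDistinct p) (hodd : Odd (maxPart p)) :
    p.parts.count (maxPart p) = 1 := by
  have hn : n ≠ 0 := by
    rintro rfl
    simp [maxPart] at hodd
  exact le_antisymm (hp _ hodd) (Multiset.count_pos.2 (maxPart_mem p hn))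

end MaxPart

/-- The partition of `n + 1` obtained from a partition of `n` by adding 1 to one copy of its largest
part. The empty partition, whose `maxPart` is 0, is sent to the partition `{1}`. -/
def addOneToMaxPart {n : ℕ} (p : n.Partition) : (n + 1).Partition where
  parts := (maxPart p + 1) ::ₘ p.parts.erase (maxPart p)
  parts_pos := by
    intro i hi
    obtain rfl | hi := Multiset.mem_cons.1 hi
    · exact Nat.succ_pos _
    · exact p.parts_pos (Multiset.mem_of_mem_erase hi)
  parts_sum := by
    rw [Multiset.sum_cons, add_right_comm, maxPart_add_sum_erase]

section AddOneToMaxPart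

variable {n : ℕ} (p : n.Partition)

theorem parts_addOneToMaxPart :
    (addOneToMaxPart p).parts = (maxPart p + 1) ::ₘ p.parts.erase (maxPart p) :=
  rfl

theorem maxPart_addOneToMaxPart : maxPart (addOneToMaxPart p) = maxPart p + 1 :=
  multiset_sup_cons_eq_left fun _ hx => (le_maxPart_of_mem_erase hx).trans (Nat.le_succ _)

theorem addOneToMaxPart_injective :
    Function.Injective (addOneToMaxPart : n.Partition → (n + 1).Partition) := by
  intro p q hpq
  obtain rfl | hn := eq_or_ne n 0
  · exact Subsingleton.elim p q
  have hmax : maxPart p = maxPart q := by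
    simpa only [maxPart_addOneToMaxPart, Nat.add_right_cancel_iff] using congrArg maxPart hpq
  have herase : p.parts.erase (maxPart p) = q.parts.erase (maxPart q) := by
    simpa only [parts_addOneToMaxPart, hmax, Multiset.cons_inj_right] using
      congrArg Nat.Partition.parts hpq
  ext1
  rw [← Multiset.cons_erase (maxPart_mem p hn), ← Multiset.cons_erase (maxPart_mem q hn), herase,
    hmax]

theorem count_maxPart_addOneToMaxPart :
    (addOneToMaxPart p).parts.count (maxPart (addOneToMaxPart p)) = 1 := by
  have hnotMem : maxPart p + 1 ∉ p.parts.erase (maxPart p) := fun h =>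
    (Nat.lt_succ_self _).not_ge (le_maxPart_of_mem_erase h)
  rw [maxPart_addOneToMaxPart, parts_addOneToMaxPart, Multiset.count_cons_self,
    Multiset.count_eq_zero_of_notMem hnotMem]

theorem exists_addOneToMaxPart_eq {q : (n + 1).Partition}
    (hq : q.parts.count (maxPart q) = 1) : ∃ p, addOneToMaxPart p = q := by
  obtain rfl | hn := eq_or_ne n 0
  · exact ⟨default, @Subsingleton.elim (Nat.Partition 1) _ _ _⟩
  have hmax : 1 < maxPart q := one_lt_maxPart (by omega) hq
  have hsum := maxPart_add_sum_erase q
  let p : n.Partition :=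
    { parts := (maxPart q - 1) ::ₘ q.parts.erase (maxPart q)
      parts_pos := by
        intro i hi
        obtain rfl | hi := Multiset.mem_cons.1 hi
        · omega
        · exact q.parts_pos (Multiset.mem_of_mem_erase hi)
      parts_sum := by
        rw [Multiset.sum_cons]
        omega }
  have hp : maxPart p = maxPart q - 1 :=
    multiset_sup_cons_eq_left fun _ hx => Nat.le_sub_one_of_lt (lt_sup_of_mem_erase_sup hq.le hx)
  refine ⟨p, Nat.Partition.ext ?_⟩
  rw [parts_addOneToMaxPart, hp, Multiset.erase_cons_head, Nat.sub_add_cancel hmax.le,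
    Multiset.cons_erase (maxPart_mem q n.succ_ne_zero)]

theorem range_addOneToMaxPart :
    Set.range (addOneToMaxPart : n.Partition → (n + 1).Partition) =
      {q | q.parts.count (maxPart q) = 1} := by
  ext q
  refine ⟨?_, exists_addOneToMaxPart_eq⟩
  rintro ⟨p, rfl⟩
  exact count_maxPart_addOneToMaxPart p

theorem OddDistinct.mem_range_addOneToMaxPart {q : (n + 1).Partition} (hq : OddDistinct q)
    (hodd : Odd (maxPart q)) : q ∈ Set.range addOneToMaxPart := by
  rw [range_addOneToMaxPart]
  exact hq.count_maxPart hodd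

theorem odd_maxPart_addOneToMaxPart :
    Odd (maxPart (addOneToMaxPart p)) ↔ Even (maxPart p) := by
  rw [maxPart_addOneToMaxPart, Nat.odd_add_one, Nat.not_odd_iff_even]

theorem pred_maxPart_notMem_addOneToMaxPart :
    maxPart (addOneToMaxPart p) - 1 ∉ (addOneToMaxPart p).parts ↔
      p.parts.count (maxPart p) ≤ 1 := by
  rw [maxPart_addOneToMaxPart, Nat.add_sub_cancel, parts_addOneToMaxPart, Multiset.mem_cons,
    or_iff_right (Nat.lt_succ_self _).ne, ← Multiset.count_eq_zero, Multiset.count_erase_self,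
    Nat.sub_eq_zero_iff_le]

variable {p}

theorem oddDistinct_addOneToMaxPart (heven : Even (maxPart p)) :
    OddDistinct (addOneToMaxPart p) ↔ OddDistinct p := by
  refine forall₂_congr fun i hi => ?_
  have hi_ne : i ≠ maxPart p := by
    rintro rfl
    exact Nat.not_even_iff_odd.2 hi heven
  obtain rfl | hi_ne_succ := eq_or_ne i (maxPart p + 1)
  · have hnew : (addOneToMaxPart p).parts.count (maxPart p + 1) = 1 :=
      maxPart_addOneToMaxPart p ▸ count_maxPart_addOneToMaxPart p
    have hold : p.parts.count (maxPart p + 1) = 0 :=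
      Multiset.count_eq_zero_of_notMem fun h => (Nat.lt_succ_self _).not_ge (Multiset.le_sup h)
    simp only [hnew, hold, le_refl, zero_le]
  · rw [parts_addOneToMaxPart, Multiset.count_cons_of_ne hi_ne_succ,
      Multiset.count_erase_of_ne hi_ne]

theorem oddDistinct_odd_pred_notMem_addOneToMaxPart (hn : n ≠ 0) :
    (OddDistinct (addOneToMaxPart p) ∧ Odd (maxPart (addOneToMaxPart p)) ∧
        maxPart (addOneToMaxPart p) - 1 ∉ (addOneToMaxPart p).parts) ↔
      OddDistinct p ∧ p.parts ≠ 0 ∧ Even (maxPart p) ∧ p.parts.count (maxPart p) = 1 := by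
  have hmem : maxPart p ∈ p.parts := maxPart_mem p hn
  have hne : p.parts ≠ 0 := fun h => Multiset.notMem_zero _ (h ▸ hmem)
  have hcount : p.parts.count (maxPart p) ≤ 1 ↔ p.parts.count (maxPart p) = 1 :=
    ⟨fun h => le_antisymm h (Multiset.count_pos.2 hmem), le_of_eq⟩
  rw [odd_maxPart_addOneToMaxPart, pred_maxPart_notMem_addOneToMaxPart, hcount,
    and_iff_right hne]
  exact and_congr_left fun h => oddDistinct_addOneToMaxPart h.1

end AddOneToMaxPart

theorem o3_eq_card_largest_odd_pred_not_mem : ∀ n : ℕ, 2 ≤ n →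
    o3 (n - 1) =
      Nat.card {p : n.Partition // OddDistinct p ∧ Odd (maxPart p) ∧
        maxPart p - 1 ∉ p.parts} := by
  intro n hn
  obtain ⟨k, rfl⟩ : ∃ k, n = k + 1 := ⟨n - 1, by omega⟩
  have hk : k ≠ 0 := by omega
  calc
    o3 k = Nat.card (addOneToMaxPart ⁻¹' {q : (k + 1).Partition | OddDistinct q ∧
        Odd (maxPart q) ∧ maxPart q - 1 ∉ q.parts}) :=
      Nat.card_congr <| Equiv.subtypeEquivRight fun _ =>
        (oddDistinct_odd_pred_notMem_addOneToMaxPart hk).symm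
    _ = _ := Nat.card_preimage_of_injective addOneToMaxPart_injective fun _ hq =>
      hq.1.mem_range_addOneToMaxPart hq.2.1
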